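/- Let v ∈ ℝ^n with v_0 ≤ v_1 ≤ ⋯ ≤ v_{n−1}. There exist nonnegative real numbers y_1, …, y_n such that P_{n−1}(v) = ∑_{k=1}^{n} y_k·Π_{n−1}(k−1) (Minkowski sum of scaled sets) if and only if all backward differences of v are nonnegative, i.e. Δ^i(v)_k ≥ 0 for all 0 ≤ i ≤ k ≤ n−1. -/

import Mathlib

open Pointwise

noncomputable section

/-- The simplex Δ_F ⊆ ℝ^n for F ⊆ {0,…,n−1}. -/
def stdSimplexOn (n : ℕ) (F : Finset (Fin n)) : Set (Fin n → ℝ) :=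
  {x | (∀ i, 0 ≤ x i) ∧ (∀ i, i ∉ F → x i = 0) ∧ ∑ i, x i = 1}

/-- The general permutahedron Π_{n−1}(k−1) ⊆ ℝ^n, Minkowski sum of all Δ_F with |F| = k. -/
def genPerm (n k : ℕ) : Set (Fin n → ℝ) :=
  ∑ F ∈ Finset.univ.powersetCard k, stdSimplexOn n F

/-- P_{n−1}(v): convex hull of the orbit of v under coordinate permutations. -/
def permPoly {n : ℕ} (v : Fin n → ℝ) : Set (Fin n → ℝ) :=
  convexHull ℝ {w | ∃ σ : Equiv.Perm (Fin n), w = v ∘ σ}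

/-- Dimension of a subset of ℝ^n : dimension of its affine span. -/
def setDim {n : ℕ} (S : Set (Fin n → ℝ)) : ℕ :=
  Module.finrank ℝ (affineSpan ℝ S).direction

/-- Nonempty exposed face of P : the maximizer set of some linear functional. -/
def IsExpFace {n : ℕ} (P A : Set (Fin n → ℝ)) : Prop :=
  A.Nonempty ∧ ∃ L : (Fin n → ℝ) →ₗ[ℝ] ℝ, A = {x ∈ P | ∀ y ∈ P, L y ≤ L x}

/-- Stirling numbers of the second kind. -/
def stirling2 : ℕ → ℕ → ℕ
  | 0, 0 => 1
  | 0, _ + 1 => 0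
  | _ + 1, 0 => 0
  | n + 1, k + 1 => (k + 1) * stirling2 n (k + 1) + stirling2 n k

/-- i-th backward difference of u at position k. -/
def bdiff {n : ℕ} (u : Fin n → ℝ) (i : ℕ) (k : Fin n) : ℝ :=
  ∑ j ∈ Finset.range (i + 1), (-1 : ℝ) ^ j * (i.choose j) *
    u ⟨(k : ℕ) - j, lt_of_le_of_lt (Nat.sub_le _ _) k.isLt⟩

/-- The number of chains A_1 ⊆ ⋯ ⊆ A_ℓ of nonempty exposed faces of P with dim A_i = s i. -/
def flagCount {n : ℕ} (P : Set (Fin n → ℝ)) (l : ℕ) (s : Fin l → ℕ) : ℕ :=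
  Nat.card {A : Fin l → Set (Fin n → ℝ) //
    (∀ i, IsExpFace P (A i) ∧ setDim (A i) = s i) ∧ ∀ i j, i ≤ j → A i ⊆ A j}

/-- The exponential (l+1)-flag polynomial of P ⊆ ℝ^n (a polytope of dimension n−1). -/
def xiFlag {n : ℕ} (P : Set (Fin n → ℝ)) (l : ℕ) (x : Fin (l + 1) → ℝ) : ℝ :=
  ∑ s : Fin (l + 1) → Fin n, if Monotone s then
    ((flagCount P (l + 1) (fun i => (s i : ℕ)) : ℝ) / (Nat.factorial (n - (s 0 : ℕ)))) *
      ∏ i : Fin (l + 1), x i ^ (if (i : ℕ) = 0 then (s i : ℕ) else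
        (s i : ℕ) - (s ⟨(i : ℕ) - 1, lt_of_le_of_lt (Nat.sub_le _ _) i.isLt⟩ : ℕ))
  else 0

/-- The standard permutahedron Π_{n−1} ⊆ ℝ^n. -/
def stdPermutahedron (n : ℕ) : Set (Fin n → ℝ) :=
  convexHull ℝ {w | ∃ σ : Equiv.Perm (Fin n), ∀ i, w i = ((σ i : ℕ) : ℝ) + 1}

/-- E_m(t) = ∑_{j=0}^m t^j/j!, the degree-m Taylor polynomial of exp. -/
def Etaylor (m : ℕ) (t : ℝ) : ℝ :=
  ∑ j ∈ Finset.range (m + 1), t ^ j / (Nat.factorial j)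

end

/-!
If a point of `S` maximizes every linear functional whose coefficients are ordered by a permutation
`σ`, call it the vertex of `S` in the braid chamber of `σ`. These vertices add up under Minkowski
sums, and by Hahn–Banach a convex set having one for every `σ` is their convex hull.

On `Δ_F` the vertex is the basis vector at the `σ`-largest element of `F`. Summed over all `F` of
size `k + 1`, its coordinate `i` counts the sets with `σ`-largest element `i`, of which there are
`(σ i).choose k`. So `∑ y_k · Π_{n-1}(k)`, with `k` from `0` to `n - 1`, is `P_{n-1}(w)` for the
monotone vector `w_i = ∑ y_k · i.choose k`. A monotone vector is determined by its permutation
polytope, and Newton's forward difference formula says that `v = w` exactly when `y_k` is the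
`k`-th backward difference of `v` at `k`; the other backward differences of `w` are nonnegative
combinations of the `y_k`.
-/

open scoped Finset

section NewtonSeries

variable {n : ℕ}

/-- The sequence `m ↦ ∑ k, y k * m.choose k` whose iterated forward differences at `0` are the
entries of `y`. Its first `n` values are, for `0 ≤ y`, the sorted
vertex of `∑ k, y k • Π_{n-1}(k)`. -/
def newtonSeries (y : Fin n → ℝ) : ℕ → ℝ :=
  ∑ k : Fin n, y k • fun m : ℕ => (m.choose k : ℝ)

theorem newtonSeries_apply (y : Fin n → ℝ) (m : ℕ) :
    newtonSeries y m = ∑ k : Fin n, y k * (m.choose k : ℝ) := by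
  simp [newtonSeries]

theorem monotone_newtonSeries {y : Fin n → ℝ} (hy : 0 ≤ y) : Monotone (newtonSeries y) := by
  intro m m' hm
  simp only [newtonSeries_apply]
  gcongr with k
  exact hy k

theorem fwdDiff_iter_natCast_choose_nonneg (i l m : ℕ) :
    0 ≤ (fwdDiff 1)^[i] (fun x : ℕ => (x.choose l : ℝ)) m := by
  induction i generalizing l with
  | zero => exact Nat.cast_nonneg _
  | succ i ih =>
    rw [Function.iterate_succ_apply]
    cases l with
    | zero => simp [fwdDiff_iter_eq_sum_shift]
    | succ l =>
      have pascal :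
          fwdDiff 1 (fun x : ℕ => (x.choose (l + 1) : ℝ)) = fun x => (x.choose l : ℝ) := by
        ext x
        simp [fwdDiff, Nat.choose_succ_succ']
      rw [pascal]
      exact ih l

theorem fwdDiff_iter_newtonSeries_nonneg {y : Fin n → ℝ} (hy : 0 ≤ y) (i m : ℕ) :
    0 ≤ (fwdDiff 1)^[i] (newtonSeries y) m := by
  rw [newtonSeries, fwdDiff_iter_finsetSum, Finset.sum_apply]
  refine Finset.sum_nonneg fun k _ => ?_
  rw [fwdDiff_iter_const_smul]
  exact mul_nonneg (hy k) (fwdDiff_iter_natCast_choose_nonneg i k m)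

theorem bdiff_comp_val (g : ℕ → ℝ) {i : ℕ} {k : Fin n} (hik : i ≤ k) :
    bdiff (g ∘ Fin.val) i k = (fwdDiff 1)^[i] g (k - i) := by
  rw [fwdDiff_iter_eq_sum_shift, bdiff, ← Finset.sum_range_reflect]
  refine Finset.sum_congr rfl fun j hj => ?_
  have hj : j ≤ i := Nat.lt_succ_iff.mp (Finset.mem_range.mp hj)
  have hshift : (k : ℕ) - (i - j) = k - i + j := by omega
  simp [Nat.choose_symm hj, hshift]

theorem newtonSeries_bdiff (v : Fin n → ℝ) :
    newtonSeries (fun k => bdiff v k k) ∘ Fin.val = v := by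
  obtain ⟨g, rfl⟩ := Fin.val_injective.surjective_comp_right v
  ext i
  simp only [Function.comp_apply, newtonSeries_apply, bdiff_comp_val g le_rfl, Nat.sub_self]
  calc ∑ k : Fin n, (fwdDiff 1)^[k] g 0 * ((i : ℕ).choose k : ℝ)
      = ∑ k ∈ Finset.range n, (fwdDiff 1)^[k] g 0 * ((i : ℕ).choose k : ℝ) :=
        Fin.sum_univ_eq_sum_range (fun k => (fwdDiff 1)^[k] g 0 * ((i : ℕ).choose k : ℝ)) n
    _ = ∑ k ∈ Finset.range (i + 1), (fwdDiff 1)^[k] g 0 * ((i : ℕ).choose k : ℝ) := by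
        refine (Finset.sum_subset (Finset.range_mono i.isLt) fun k _ hk => ?_).symm
        rw [Nat.choose_eq_zero_of_lt (by simpa using hk), Nat.cast_zero, mul_zero]
    _ = g i := by
        simpa [mul_comm] using (shift_eq_sum_fwdDiff_iter 1 g i 0).symm

end NewtonSeries

section BraidVertex

variable {ι α : Type*} [Fintype ι]

/-- `p` is the vertex of `S` in the braid chamber of the ranking `r`: it maximizes over `S` every
linear functional `c ⬝ᵥ ·` whose coefficients are ordered as `r` prescribes. The polytopes with a
vertex for each injective ranking are the generalized permutahedra. -/
structure IsBraidVertex [Preorder α] (r : ι → α) (S : Set (ι → ℝ)) (p : ι → ℝ) : Prop where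
  mem : p ∈ S
  dotProduct_le : ∀ ⦃c : ι → ℝ⦄, Monovary c r → ∀ x ∈ S, c ⬝ᵥ x ≤ c ⬝ᵥ p

namespace IsBraidVertex

section Preorder

variable [Preorder α] {r : ι → α}

theorem smul {S : Set (ι → ℝ)} {p : ι → ℝ} (h : IsBraidVertex r S p) {a : ℝ} (ha : 0 ≤ a) :
    IsBraidVertex r (a • S) (a • p) where
  mem := Set.smul_mem_smul_set h.mem
  dotProduct_le := by
    rintro c hc _ ⟨x, hx, rfl⟩
    simp only [dotProduct_smul]
    exact smul_le_smul_of_nonneg_left (h.dotProduct_le hc x hx) ha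

theorem sum {κ : Type*} {s : Finset κ} {S : κ → Set (ι → ℝ)} {p : κ → ι → ℝ}
    (h : ∀ k ∈ s, IsBraidVertex r (S k) (p k)) :
    IsBraidVertex r (∑ k ∈ s, S k) (∑ k ∈ s, p k) where
  mem := Set.finsetSum_mem_finsetSum _ _ _ fun k hk => (h k hk).mem
  dotProduct_le := by
    intro c hc x hx
    obtain ⟨g, hg, rfl⟩ := (Set.mem_finsetSum _ _ _).mp hx
    simp only [dotProduct_sum]
    exact Finset.sum_le_sum fun k hk => (h k hk).dotProduct_le hc _ (hg hk)

theorem eq_of_monovary {S : Set (ι → ℝ)} {p q : ι → ℝ} (hp : IsBraidVertex r S p)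
    (hq : IsBraidVertex r S q) (hpr : Monovary p r) (hqr : Monovary q r) : p = q := by
  have dotProduct_eq {c : ι → ℝ} (hc : Monovary c r) : c ⬝ᵥ p = c ⬝ᵥ q :=
    (hq.dotProduct_le hc p hp.mem).antisymm (hp.dotProduct_le hc q hq.mem)
  rw [← sub_eq_zero, ← dotProduct_self_eq_zero, sub_dotProduct, dotProduct_sub, dotProduct_sub,
    dotProduct_eq hpr, dotProduct_eq hqr, sub_self, sub_self, sub_self]

end Preorder

theorem convexHull_range_eq {n : ℕ} {S : Set (Fin n → ℝ)} {p : Equiv.Perm (Fin n) → Fin n → ℝ}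
    (hS : Convex ℝ S) (h : ∀ σ : Equiv.Perm (Fin n), IsBraidVertex σ S (p σ)) :
    convexHull ℝ (Set.range p) = S := by
  refine (convexHull_min (Set.range_subset_iff.mpr fun σ => (h σ).mem) hS).antisymm fun x hx => ?_
  by_contra hxp
  obtain ⟨f, u, hfp, hfx⟩ := geometric_hahn_banach_closed_point (convex_convexHull ℝ _)
    ((Set.finite_range p).isClosed_convexHull ℝ) hxp
  obtain ⟨c, hc⟩ := (dotProductEquiv ℝ (Fin n)).surjective f.toLinearMap
  have hf (z : Fin n → ℝ) : c ⬝ᵥ z = f z := LinearMap.congr_fun hc z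
  have hsort : Monovary c (Tuple.sort c).symm := by
    simpa [Function.comp_assoc] using
      ((Tuple.monotone_sort c).monovary monotone_id).comp_right (Tuple.sort c).symm
  have hle := (h (Tuple.sort c).symm).dotProduct_le hsort x hx
  rw [hf, hf] at hle
  exact (hfx.trans_le hle).not_gt (hfp _ (subset_convexHull ℝ _ (Set.mem_range_self _)))

end IsBraidVertex

end BraidVertex

section PermPoly

variable {n : ℕ}

theorem permPoly_eq_convexHull_range (v : Fin n → ℝ) :
    permPoly v = convexHull ℝ (Set.range fun σ : Equiv.Perm (Fin n) => v ∘ σ) := by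
  simp only [permPoly, Set.range, eq_comm]

theorem isBraidVertex_permPoly {v : Fin n → ℝ} (hv : Monotone v) (σ : Equiv.Perm (Fin n)) :
    IsBraidVertex σ (permPoly v) (v ∘ σ) where
  mem := subset_convexHull ℝ _ ⟨σ, rfl⟩
  dotProduct_le := by
    intro c hc
    have hcv : Monovary c (v ∘ σ) := fun _ _ hij => hc (hv.reflect_lt hij)
    refine convexHull_min ?_ (convex_halfSpace_le (dotProductEquiv ℝ (Fin n) c).isLinear _)
    rintro _ ⟨τ, rfl⟩
    change c ⬝ᵥ (v ∘ τ) ≤ c ⬝ᵥ (v ∘ σ)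
    simpa [dotProduct] using hcv.sum_mul_comp_perm_le_sum_mul (σ := τ.trans σ.symm)

theorem permPoly_injOn_monotone : Set.InjOn (permPoly (n := n)) {v | Monotone v} := by
  intro v hv w hw hvw
  have hmono {u : Fin n → ℝ} (hu : Monotone u) : Monovary u (1 : Equiv.Perm (Fin n)) :=
    hu.monovary monotone_id
  refine (isBraidVertex_permPoly hv 1).eq_of_monovary ?_ (hmono hv) (hmono hw)
  exact hvw ▸ isBraidVertex_permPoly hw 1

end PermPoly

section ArgmaxIndicator

variable {ι α : Type*}

/-- The vector with entry `1` at the `r`-largest element of `F` and `0` elsewhere, for an injective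
ranking `r`; it is the vertex of `Δ_F` in the braid chamber of `r`. -/
noncomputable def argmaxIndicator [LE α] (r : ι → α) (F : Finset ι) : ι → ℝ :=
  Set.indicator {i | i ∈ F ∧ ∀ j ∈ F, r j ≤ r i} 1

theorem argmaxIndicator_eq_single [PartialOrder α] [DecidableEq ι] {r : ι → α}
    (hr : r.Injective) {F : Finset ι} {m : ι} (hm : m ∈ F) (hmax : ∀ j ∈ F, r j ≤ r m) :
    argmaxIndicator r F = Pi.single m 1 := by
  have hargmax : {i | i ∈ F ∧ ∀ j ∈ F, r j ≤ r i} = {m} := by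
    refine Set.eq_singleton_iff_unique_mem.mpr ⟨⟨hm, hmax⟩, fun i hi => ?_⟩
    exact hr ((hmax i hi.1).antisymm (hi.2 m hm))
  rw [argmaxIndicator, hargmax, Set.indicator_singleton, Pi.one_apply]

variable [LinearOrder α] [Fintype ι]

theorem card_filter_powersetCard_argmax_eq [DecidableEq ι] {r : ι → α} (hr : r.Injective)
    (k : ℕ) (i : ι) :
    #{F ∈ Finset.univ.powersetCard (k + 1) | i ∈ F ∧ ∀ j ∈ F, r j ≤ r i} =
      (#{j | r j < r i}).choose k := by
  rw [← Finset.card_powersetCard]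
  -- Removing the `r`-largest element `i` leaves an arbitrary `k`-element set of smaller elements.
  refine Finset.card_nbij' (·.erase i) (insert i) ?_ ?_ ?_ ?_ <;> intro F hF <;> grind

theorem sum_powersetCard_argmaxIndicator {r : ι → α} (hr : r.Injective) (k : ℕ) (i : ι) :
    ∑ F ∈ Finset.univ.powersetCard (k + 1), argmaxIndicator r F i =
      ((#{j | r j < r i}).choose k : ℝ) := by
  classical
  simp only [argmaxIndicator, Set.indicator_apply, Set.mem_ofPred_eq, Pi.one_apply,
    Finset.sum_boole, card_filter_powersetCard_argmax_eq hr]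

end ArgmaxIndicator

section GenPerm

variable {n : ℕ}

theorem convex_stdSimplexOn (F : Finset (Fin n)) : Convex ℝ (stdSimplexOn n F) := by
  have heq : stdSimplexOn n F = stdSimplex ℝ (Fin n) ∩ Set.pi (↑F)ᶜ fun _ => {0} := by
    ext x
    simp [stdSimplexOn, stdSimplex, and_assoc, and_comm (a := ∑ i, x i = 1)]
  rw [heq]
  exact (convex_stdSimplex ℝ _).inter (convex_pi fun _ _ => convex_singleton 0)

theorem isBraidVertex_stdSimplexOn {α : Type*} [LinearOrder α] {r : Fin n → α} (hr : r.Injective)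
    {F : Finset (Fin n)} (hF : F.Nonempty) :
    IsBraidVertex r (stdSimplexOn n F) (argmaxIndicator r F) := by
  obtain ⟨m, hm, hmax⟩ := F.exists_max_image r hF
  rw [argmaxIndicator_eq_single hr hm hmax]
  have hmem : Pi.single m 1 ∈ stdSimplexOn n F :=
    ⟨(single_mem_stdSimplex ℝ m).1,
      fun i hi => Pi.single_eq_of_ne (ne_of_mem_of_not_mem hm hi).symm 1,
      (single_mem_stdSimplex ℝ m).2⟩
  refine ⟨hmem, ?_⟩
  rintro c hc x ⟨hx0, hxF, hx1⟩
  have hcm {i : Fin n} (hi : i ∈ F) : c i ≤ c m := by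
    rcases (hmax i hi).eq_or_lt with h | h
    exacts [(congrArg c (hr h)).le, hc h]
  calc c ⬝ᵥ x ≤ ∑ i, c m * x i := by
        refine Finset.sum_le_sum fun i _ => ?_
        by_cases hi : i ∈ F
        · exact mul_le_mul_of_nonneg_right (hcm hi) (hx0 i)
        · simp [hxF i hi]
    _ = c ⬝ᵥ Pi.single m 1 := by rw [← Finset.mul_sum, hx1, dotProduct_single]

theorem convex_genPerm (k : ℕ) : Convex ℝ (genPerm n k) :=
  convex_sum _ fun F _ => convex_stdSimplexOn F

theorem isBraidVertex_genPerm (σ : Equiv.Perm (Fin n)) (k : ℕ) :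
    IsBraidVertex σ (genPerm n (k + 1)) fun i => ((σ i : ℕ).choose k : ℝ) := by
  have hrank (i : Fin n) : #{j | σ j < σ i} = (σ i : ℕ) := by
    rw [← Fin.card_Iio, ← Finset.card_map σ.toEmbedding]
    congr 1
    ext j
    simp
  have hsum : (fun i => ((σ i : ℕ).choose k : ℝ)) =
      ∑ F ∈ Finset.univ.powersetCard (k + 1), argmaxIndicator σ F := by
    ext i
    rw [Finset.sum_apply, sum_powersetCard_argmaxIndicator σ.injective, hrank]
  rw [hsum]
  refine .sum fun F hF => isBraidVertex_stdSimplexOn σ.injective (Finset.card_pos.mp ?_)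
  rw [(Finset.mem_powersetCard.mp hF).2]
  exact k.succ_pos

theorem permPoly_newtonSeries {y : Fin n → ℝ} (hy : 0 ≤ y) :
    permPoly (newtonSeries y ∘ Fin.val) = ∑ k : Fin n, y k • genPerm n ((k : ℕ) + 1) := by
  rw [permPoly_eq_convexHull_range]
  refine IsBraidVertex.convexHull_range_eq
    (convex_sum _ fun k _ => (convex_genPerm _).smul _) fun σ => ?_
  have hvertex : (newtonSeries y ∘ Fin.val) ∘ σ =
      ∑ k : Fin n, y k • fun i => ((σ i : ℕ).choose k : ℝ) := by
    ext i
    simp [newtonSeries]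
  rw [hvertex]
  exact .sum fun k _ => (isBraidVertex_genPerm σ k).smul (hy k)

end GenPerm

/-- for nondecreasing v, P_{n−1}(v) is a nonnegative Minkowski
combination ∑_{k=1}^n y_k·Π_{n−1}(k−1) iff all backward differences of v are
nonnegative. -/
theorem permPoly_eq_minkowski_combination_iff (n : ℕ) (v : Fin n → ℝ)
    (hv : Monotone v) :
    (∃ y : Fin n → ℝ, (∀ k, 0 ≤ y k) ∧
        permPoly v = ∑ k : Fin n, y k • genPerm n ((k : ℕ) + 1))
      ↔ ∀ (i : ℕ) (k : Fin n), i ≤ (k : ℕ) → 0 ≤ bdiff v i k := by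
  constructor
  · rintro ⟨y, hy, hP⟩ i k hik
    have hw : Monotone (newtonSeries y ∘ Fin.val (n := n)) :=
      (monotone_newtonSeries hy).comp Fin.val_strictMono.monotone
    rw [permPoly_injOn_monotone hv hw (hP.trans (permPoly_newtonSeries hy).symm),
      bdiff_comp_val _ hik]
    exact fwdDiff_iter_newtonSeries_nonneg hy i _
  · intro h
    have hy (k : Fin n) : 0 ≤ bdiff v k k := h k k le_rfl
    exact ⟨_, hy, by rw [← permPoly_newtonSeries hy, newtonSeries_bdiff]⟩
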